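/- Let d ≥ 2 and 0 < s < 1. The renormalized periodic fractional perimeter 𝒫^s_♯ satisfies assumption (H): for every L > 0 and δ > 0 there exist ε₀ ∈ (0,1) and C(δ,L) > 0 such that for every R > 0 and every E ∈ 𝔠_L ∩ 𝔐_R with osc_{𝕋^{d−1}} f_E ≥ δ one has 𝒫^s_♯(E) − 𝒫^s_♯(E_ε) ≥ C(δ,L) ε for all 0 < ε ≤ ε₀. -/

import Mathlib

open MeasureTheory Filter Set
open scoped ENNReal

noncomputable section

/-- Euclidean space `ℝ^m`. -/
abbrev Rm (m : ℕ) : Type := EuclideanSpace ℝ (Fin m)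

/-- The fundamental cube `[0,1)^m`. -/
def cube (m : ℕ) : Set (Rm m) := {x | ∀ i, x i ∈ Set.Ico (0:ℝ) 1}

/-- Euclidean norm on `ℝ^{d-1} × ℝ`. -/
def enorm2 (d : ℕ) (x : Rm (d-1) × ℝ) : ℝ := Real.sqrt (‖x.1‖ ^ 2 + x.2 ^ 2)

/-- The fractional kernel `J^s(ξ) = |ξ|^{-(d+s)}`. -/
def Js (d : ℕ) (s : ℝ) (ξ : Rm (d-1) × ℝ) : ℝ := (enorm2 d ξ) ^ (-((d : ℝ) + s))

/-- The fundamental domain `[0,1)^{d-1} × ℝ` of `𝕋^{d-1} × ℝ` inside `ℝ^d`. -/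
def fund (d : ℕ) : Set (Rm (d-1) × ℝ) := {x | ∀ i, x.1 i ∈ Set.Ico (0:ℝ) 1}

/-- The renormalized periodic fractional perimeter `𝒫^s_♯` of a (periodic) set
`A ⊆ ℝ^d`, computed on the fundamental domain and renormalized by the halfspaces. -/
def Psharp (d : ℕ) (s : ℝ) (A : Set (Rm (d-1) × ℝ)) : ℝ :=
  ∫ x in fund d, ∫ y,
    ((A.indicator (fun _ => (1:ℝ)) x) * (Aᶜ.indicator (fun _ => (1:ℝ)) y)
      - ({q : Rm (d-1) × ℝ | q.2 < 0}.indicator (fun _ => (1:ℝ)) x)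
        * ({q : Rm (d-1) × ℝ | 0 < q.2}.indicator (fun _ => (1:ℝ)) y))
      * Js d s (x - y)

/-! ### The fundamental cube -/

lemma cube_eq_fundamentalDomain (m : ℕ) :
    cube m = ZSpan.fundamentalDomain (EuclideanSpace.basisFun (Fin m) ℝ).toBasis := by
  ext x
  simp [cube, ZSpan.mem_fundamentalDomain]

lemma measurableSet_cube (m : ℕ) : MeasurableSet (cube m) := by
  rw [cube_eq_fundamentalDomain]
  exact ZSpan.fundamentalDomain_measurableSet _

lemma volume_cube_lt_top (m : ℕ) : volume (cube m) < ∞ := by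
  rw [cube_eq_fundamentalDomain]
  exact (ZSpan.fundamentalDomain_isBounded _).measure_lt_top

instance isFiniteMeasure_restrict_cube (m : ℕ) :
    IsFiniteMeasure ((volume : Measure (Rm m)).restrict (cube m)) :=
  ⟨by simpa using volume_cube_lt_top m⟩

lemma fund_eq_cube_prod (d : ℕ) : fund d = cube (d - 1) ×ˢ (univ : Set ℝ) := by
  ext x
  simp [fund, cube]

lemma volume_restrict_fund (d : ℕ) :
    (volume : Measure (Rm (d - 1) × ℝ)).restrict (fund d)
      = ((volume : Measure (Rm (d - 1))).restrict (cube (d - 1))).prod (volume : Measure ℝ) := by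
  rw [fund_eq_cube_prod, Measure.volume_eq_prod, ← Measure.prod_restrict, Measure.restrict_univ]

/-- `ℤ^m`-periodicity of a function on `ℝ^m`. -/
def IsIntPeriodic {m : ℕ} (g : Rm m → ℝ) : Prop :=
  ∀ (x : Rm m) (z : Fin m → ℤ), g (x + WithLp.toLp 2 (fun i => (z i : ℝ))) = g x

lemma IsIntPeriodic.setIntegral_cube_add {m : ℕ} {g : Rm m → ℝ} (hg : IsIntPeriodic g)
    (h : Rm m) : ∫ x in cube m, g (x + h) = ∫ x in cube m, g x := by
  have hmem : ∀ (v : Submodule.span ℤ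
      (Set.range (EuclideanSpace.basisFun (Fin m) ℝ).toBasis)) (x : Rm m), g (v +ᵥ x) = g x := by
    intro v x
    have hv := (Module.Basis.mem_span_iff_repr_mem ℤ _ (v : Rm m)).1 v.2
    choose z hz using hv
    have hvz : (v : Rm m) = WithLp.toLp 2 (fun i => (z i : ℝ)) := by
      ext i
      simpa using (hz i).symm
    rw [Submodule.vadd_def, hvz, vadd_eq_add, add_comm]
    exact hg x z
  have hF := ZSpan.isAddFundamentalDomain (EuclideanSpace.basisFun (Fin m) ℝ).toBasis
    (volume : Measure (Rm m))
  rw [← cube_eq_fundamentalDomain] at hF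
  have hinv : VAddInvariantMeasure (Submodule.span ℤ
      (Set.range (EuclideanSpace.basisFun (Fin m) ℝ).toBasis)) (Rm m) volume :=
    inferInstanceAs <| VAddInvariantMeasure (Submodule.span ℤ
      (Set.range (EuclideanSpace.basisFun (Fin m) ℝ).toBasis)).toAddSubgroup (Rm m) volume
  have hT := hF.vadd_of_comm h
  rw [← hT.setIntegral_eq hF hmem]
  have := (measurePreserving_vadd h (volume : Measure (Rm m))).setIntegral_image_emb
    (measurableEmbedding_const_vadd h) g (cube m)
  rw [← Set.image_vadd, this]
  simp [add_comm]

lemma IsIntPeriodic.exists_mem_cube {m : ℕ} {g : Rm m → ℝ} (hg : IsIntPeriodic g) (x : Rm m) :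
    ∃ y ∈ cube m, g y = g x := by
  refine ⟨x + WithLp.toLp 2 (fun i => ((-⌊x i⌋ : ℤ) : ℝ)), fun i => ?_, hg x _⟩
  have h0 := Int.fract_nonneg (x i)
  have h1 := Int.fract_lt_one (x i)
  rw [Int.fract] at h0 h1
  constructor <;> simp <;> linarith

lemma norm_le_card_mul {m : ℕ} {x : Rm m} {c : ℝ} (hc : 0 ≤ c) (hx : ∀ i, |x i| ≤ c) :
    ‖x‖ ≤ m * c := by
  rw [EuclideanSpace.norm_eq]
  refine Real.sqrt_le_iff.2 ⟨by positivity, ?_⟩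
  calc ∑ i, ‖x i‖ ^ 2 ≤ ∑ _i : Fin m, c ^ 2 := by
        refine Finset.sum_le_sum fun i _ => ?_
        exact pow_le_pow_left₀ (norm_nonneg _) (hx i) 2
    _ = m * c ^ 2 := by simp
    _ ≤ (m * c) ^ 2 := by
        have : (m : ℝ) ≤ (m : ℝ) ^ 2 := by exact_mod_cast Nat.le_self_pow two_ne_zero m
        nlinarith [sq_nonneg c]

/-- Inside the cube, every point has a subset of fixed positive measure near it. -/
lemma exists_pos_le_volume_ball_inter_cube (m : ℕ) {r : ℝ} (hr : 0 < r) :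
    ∃ v : ℝ, 0 < v ∧ ∀ p ∈ cube m, v ≤ volume.real (Metric.closedBall p r ∩ cube m) := by
  set ρ : ℝ := min 1 (r / (m + 1)) with hρ
  have hρ0 : 0 < ρ := by positivity
  have hρ1 : ρ ≤ 1 := min_le_left _ _
  have hmρ : m * ρ ≤ r := by
    have h1 : ρ ≤ r / (m + 1) := min_le_right _ _
    rw [le_div_iff₀ (by positivity)] at h1
    nlinarith
  refine ⟨ρ ^ m, by positivity, fun p hp => ?_⟩
  set B : Set (Fin m → ℝ) := Set.univ.pi fun i => Ico ((1 - ρ) * p i) ((1 - ρ) * p i + ρ)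
  have hB : volume.real ((WithLp.ofLp : Rm m → _) ⁻¹' B) = ρ ^ m := by
    rw [Measure.real, (PiLp.volume_preserving_ofLp (Fin m)).measure_preimage
      (MeasurableSet.univ_pi fun i => measurableSet_Ico).nullMeasurableSet,
      Real.volume_pi_Ico]
    simp [hρ0.le]
  rw [← hB]
  refine measureReal_mono (fun x hx => ?_)
    ((measure_mono inter_subset_right).trans_lt (volume_cube_lt_top m)).ne
  have hx' : ∀ i, x i ∈ Ico ((1 - ρ) * p i) ((1 - ρ) * p i + ρ) := fun i => hx i (mem_univ i)
  refine ⟨?_, fun i => ?_⟩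
  · rw [Metric.mem_closedBall, dist_eq_norm]
    refine (norm_le_card_mul hρ0.le fun i => ?_).trans hmρ
    have h1 := hx' i
    have h2 := hp i
    rw [PiLp.sub_apply, abs_le]
    constructor <;> nlinarith [h1.1, h1.2, h2.1, h2.2]
  · have h1 := hx' i
    have h2 := hp i
    constructor <;> nlinarith [h1.1, h1.2, h2.1, h2.2]

/-! ### The kernel -/

lemma norm_le_enorm2 (d : ℕ) (ξ : Rm (d - 1) × ℝ) : ‖ξ‖ ≤ enorm2 d ξ := by
  rw [enorm2, Prod.norm_def]
  refine max_le ?_ ?_ <;> refine Real.le_sqrt_of_sq_le ?_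
  · nlinarith [sq_nonneg ξ.2]
  · rw [Real.norm_eq_abs, sq_abs]
    nlinarith [sq_nonneg ‖ξ.1‖]

lemma enorm2_le (d : ℕ) (ξ : Rm (d - 1) × ℝ) : enorm2 d ξ ≤ ‖ξ.1‖ + |ξ.2| := by
  refine Real.sqrt_le_iff.2 ⟨by positivity, ?_⟩
  nlinarith [sq_abs ξ.2, mul_nonneg (norm_nonneg ξ.1) (abs_nonneg ξ.2)]

lemma measurable_Js (d : ℕ) (s : ℝ) : Measurable (Js d s) := by
  unfold Js enorm2
  fun_prop

lemma Js_nonneg (d : ℕ) (s : ℝ) (ξ : Rm (d - 1) × ℝ) : 0 ≤ Js d s ξ :=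
  Real.rpow_nonneg (Real.sqrt_nonneg _) _

lemma Js_neg (d : ℕ) (s : ℝ) (ξ : Rm (d - 1) × ℝ) : Js d s (-ξ) = Js d s ξ := by
  simp [Js, enorm2]

lemma Js_neg_snd (d : ℕ) (s : ℝ) (h : Rm (d - 1)) (u : ℝ) : Js d s (h, -u) = Js d s (h, u) := by
  simp [Js, enorm2]

lemma Js_le (d : ℕ) {s : ℝ} (hs : 0 < s) (ξ : Rm (d - 1) × ℝ) :
    Js d s ξ ≤ ‖ξ‖ ^ (-((d : ℝ) + s)) := by
  rcases eq_or_ne ξ 0 with rfl | h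
  · simp [Js, enorm2]
  · exact Real.rpow_le_rpow_of_nonpos (norm_pos_iff.2 h) (norm_le_enorm2 d ξ) (by
      have : (0 : ℝ) ≤ d := Nat.cast_nonneg d
      linarith)

lemma integrableOn_min_one_mul_rpow {s : ℝ} (hs : s ∈ Ioo (0 : ℝ) 1) :
    IntegrableOn (fun r : ℝ => min 1 r * r ^ (-(1 + s))) (Ioi 0) := by
  rw [← Ioc_union_Ioi_eq_Ioi zero_le_one]
  refine IntegrableOn.union ?_ ?_
  · have h : IntegrableOn (fun r : ℝ => r ^ (-s)) (Ioc 0 1) := by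
      rw [← intervalIntegrable_iff_integrableOn_Ioc_of_le zero_le_one]
      exact intervalIntegral.intervalIntegrable_rpow' (by linarith [hs.2])
    refine h.congr_fun (fun r hr => ?_) measurableSet_Ioc
    dsimp only
    rw [min_eq_right hr.2, show -s = 1 + -(1 + s) by ring, Real.rpow_add hr.1, Real.rpow_one]
  · have h : IntegrableOn (fun r : ℝ => r ^ (-(1 + s))) (Ioi 1) :=
      integrableOn_Ioi_rpow_of_lt (by linarith [hs.1]) one_pos
    refine h.congr_fun (fun r hr => ?_) measurableSet_Ioi
    dsimp only
    rw [min_eq_left (le_of_lt hr), one_mul]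

instance isAddHaarMeasure_volume_prod (m : ℕ) :
    (volume : Measure (Rm m × ℝ)).IsAddHaarMeasure := by
  rw [Measure.volume_eq_prod]
  infer_instance

lemma integrable_min_one_norm_mul_Js {d : ℕ} (hd : 2 ≤ d) {s : ℝ} (hs : s ∈ Ioo (0 : ℝ) 1) :
    Integrable (fun ξ : Rm (d - 1) × ℝ => min 1 ‖ξ‖ * Js d s ξ) := by
  have hdim : Module.finrank ℝ (Rm (d - 1) × ℝ) = d := by
    simp
    omega
  have h : Integrable (fun ξ : Rm (d - 1) × ℝ => min 1 ‖ξ‖ * ‖ξ‖ ^ (-((d : ℝ) + s))) := by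
    refine (integrable_fun_norm_addHaar volume
      (f := fun r : ℝ => min 1 r * r ^ (-((d : ℝ) + s)))).2 ?_
    rw [hdim]
    refine (integrableOn_min_one_mul_rpow hs).congr_fun (fun r hr => ?_) measurableSet_Ioi
    have hr : 0 < r := hr
    have hexp : -(1 + s) = ((d - 1 : ℕ) : ℝ) + -((d : ℝ) + s) := by
      rw [Nat.cast_sub (by omega)]
      push_cast
      ring
    dsimp only
    rw [hexp, Real.rpow_add hr, Real.rpow_natCast, smul_eq_mul]
    ring
  refine h.mono ?_ (Eventually.of_forall fun ξ => ?_)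
  · exact ((measurable_const.min measurable_norm).mul (measurable_Js d s)).aestronglyMeasurable
  · have h0 : 0 ≤ min 1 ‖ξ‖ := by positivity
    rw [Real.norm_of_nonneg (mul_nonneg h0 (Js_nonneg d s ξ)), Real.norm_of_nonneg (by positivity)]
    exact mul_le_mul_of_nonneg_left (Js_le d hs.1 ξ) h0

/-! ### Vertical fibres -/

/-- The renormalized interaction of a point `x` below the graph of `g` with `x + ξ`. -/
def phase {d : ℕ} (g : Rm (d - 1) → ℝ) (x ξ : Rm (d - 1) × ℝ) : ℝ :=
  ({q : Rm (d - 1) × ℝ | q.2 ≤ g q.1}.indicator (fun _ => (1 : ℝ)) x)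
      * ({q : Rm (d - 1) × ℝ | q.2 ≤ g q.1}ᶜ.indicator (fun _ => (1 : ℝ)) (x + ξ))
    - ({q : Rm (d - 1) × ℝ | q.2 < 0}.indicator (fun _ => (1 : ℝ)) x)
      * ({q : Rm (d - 1) × ℝ | 0 < q.2}.indicator (fun _ => (1 : ℝ)) (x + ξ))

lemma phase_apply {d : ℕ} (g : Rm (d - 1) → ℝ) (x' : Rm (d - 1)) (t : ℝ)
    (ξ : Rm (d - 1) × ℝ) :
    phase g (x', t) ξ = (Ioc (g (x' + ξ.1) - ξ.2) (g x')).indicator (fun _ => (1 : ℝ)) t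
      - (Ioo (-ξ.2) 0).indicator (fun _ => (1 : ℝ)) t := by
  simp only [phase, indicator_apply, mem_ofPred_eq, mem_compl_iff, mem_Ioc, mem_Ioo, Prod.fst_add,
    Prod.snd_add, not_le, sub_lt_iff_lt_add, neg_lt_iff_pos_add, mul_ite, mul_zero, ite_and,
    mul_one]

lemma measurable_phase {d : ℕ} {g : Rm (d - 1) → ℝ} (hg : Measurable g) :
    Measurable (fun z : (Rm (d - 1) × ℝ) × (Rm (d - 1) × ℝ) => phase g z.1 z.2) := by
  have hA : MeasurableSet {q : Rm (d - 1) × ℝ | q.2 ≤ g q.1} :=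
    measurableSet_le measurable_snd (hg.comp measurable_fst)
  have hN : MeasurableSet {q : Rm (d - 1) × ℝ | q.2 < 0} :=
    measurableSet_lt measurable_snd measurable_const
  have hP : MeasurableSet {q : Rm (d - 1) × ℝ | 0 < q.2} :=
    measurableSet_lt measurable_const measurable_snd
  have hadd : Measurable (fun z : (Rm (d - 1) × ℝ) × (Rm (d - 1) × ℝ) => z.1 + z.2) :=
    measurable_fst.add measurable_snd
  exact (((measurable_const.indicator hA).comp measurable_fst).mul
    ((measurable_const.indicator hA.compl).comp hadd)).sub
    (((measurable_const.indicator hN).comp measurable_fst).mul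
    ((measurable_const.indicator hP).comp hadd))

lemma integral_phase {d : ℕ} (g : Rm (d - 1) → ℝ) (x' : Rm (d - 1)) (ξ : Rm (d - 1) × ℝ) :
    ∫ t, phase g (x', t) ξ = max 0 (ξ.2 - (g (x' + ξ.1) - g x')) - max 0 ξ.2 := by
  simp_rw [phase_apply]
  rw [integral_sub (integrable_indicator_iff measurableSet_Ioc |>.2 (by simp))
    (integrable_indicator_iff measurableSet_Ioo |>.2 (by simp)),
    integral_indicator_const _ measurableSet_Ioc, integral_indicator_const _ measurableSet_Ioo,
    Real.volume_real_Ioc, Real.volume_real_Ioo, smul_eq_mul, smul_eq_mul, mul_one, mul_one,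
    max_comm, max_comm _ (0 : ℝ)]
  congr 2 <;> ring

/-- The total interaction along a vertical fibre is at most linear in `ξ` near the origin and
bounded at infinity. -/
lemma lintegral_enorm_phase_le {d : ℕ} {g : Rm (d - 1) → ℝ} {L R : ℝ} (hL : 0 ≤ L) (hR : 0 ≤ R)
    (hlip : ∀ x y, |g x - g y| ≤ L * ‖x - y‖) (hgR : ∀ x, |g x| ≤ R)
    (x' : Rm (d - 1)) (ξ : Rm (d - 1) × ℝ) :
    ∫⁻ t, ‖phase g (x', t) ξ‖ₑ ≤ ENNReal.ofReal ((2 + L + 2 * R) * min 1 ‖ξ‖) := by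
  set a := g x' with ha
  set b := g (x' + ξ.1) with hb
  have key : ∀ I J : Set ℝ, MeasurableSet I → MeasurableSet J →
      (∀ t, t ∈ Ioc (b - ξ.2) a → t ∉ Ioo (-ξ.2) 0 → t ∈ I ∪ J) →
      (∀ t, t ∉ Ioc (b - ξ.2) a → t ∈ Ioo (-ξ.2) 0 → t ∈ I ∪ J) →
      ∫⁻ t, ‖phase g (x', t) ξ‖ₑ ≤ volume I + volume J := by
    intro I J hI hJ h1 h2
    calc ∫⁻ t, ‖phase g (x', t) ξ‖ₑ ≤ ∫⁻ t, (I ∪ J).indicator (fun _ => 1) t := by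
          refine lintegral_mono fun t => ?_
          rw [phase_apply]
          by_cases h3 : t ∈ Ioc (b - ξ.2) a <;> by_cases h4 : t ∈ Ioo (-ξ.2) 0
          · simp only [← ha, ← hb, indicator_of_mem h3, indicator_of_mem h4]
            simp
          · simp only [← ha, ← hb, indicator_of_mem h3, indicator_of_notMem h4,
              indicator_of_mem (h1 t h3 h4)]
            simp
          · simp only [← ha, ← hb, indicator_of_notMem h3, indicator_of_mem h4,
              indicator_of_mem (h2 t h3 h4)]
            simp
          · simp only [← ha, ← hb, indicator_of_notMem h3, indicator_of_notMem h4]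
            simp
      _ = volume (I ∪ J) := by rw [lintegral_indicator_const (hI.union hJ), one_mul]
      _ ≤ volume I + volume J := measure_union_le _ _
  have hab : |b - a| ≤ L * ‖ξ‖ := by
    refine (hlip _ _).trans (mul_le_mul_of_nonneg_left ?_ hL)
    simpa using norm_fst_le ξ
  have hu : |ξ.2| ≤ ‖ξ‖ := norm_snd_le ξ
  have hn := norm_nonneg ξ
  rcases le_total 1 ‖ξ‖ with h | h
  · rw [min_eq_left h]
    refine (key (uIcc 0 a) (uIcc (b - ξ.2) (-ξ.2)) measurableSet_uIcc measurableSet_uIcc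
      ?_ ?_).trans ?_
    · rintro t ⟨h1, h2⟩ h3
      simp only [mem_Ioo, not_and_or, not_lt, mem_union, mem_uIcc] at h3 ⊢
      rcases h3 with h3 | h3
      · exact Or.inr (Or.inl ⟨h1.le, h3⟩)
      · exact Or.inl (Or.inl ⟨h3, h2⟩)
    · rintro t h3 ⟨h1, h2⟩
      simp only [mem_Ioc, not_and_or, not_lt, not_le, mem_union, mem_uIcc] at h3 ⊢
      rcases h3 with h3 | h3
      · exact Or.inr (Or.inr ⟨h1.le, h3⟩)
      · exact Or.inl (Or.inr ⟨h3.le, h2.le⟩)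
    · rw [Real.volume_interval, Real.volume_interval, ← ENNReal.ofReal_add (abs_nonneg _) (abs_nonneg _)]
      refine ENNReal.ofReal_le_ofReal ?_
      have h1 := hgR x'
      have h2 := hgR (x' + ξ.1)
      rw [← ha] at h1
      rw [← hb] at h2
      have e1 : |a - 0| = |a| := by rw [sub_zero]
      have e2 : |-ξ.2 - (b - ξ.2)| = |b| := by
        rw [← abs_neg]
        congr 1
        ring
      rw [e1, e2]
      linarith
  · rw [min_eq_right h]
    refine (key (Ioc (b - ξ.2) a) (Ioo (-ξ.2) 0) measurableSet_Ioc measurableSet_Ioo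
      (fun t h1 _ => Or.inl h1) (fun t _ h2 => Or.inr h2)).trans ?_
    rw [Real.volume_Ioc, Real.volume_Ioo]
    calc ENNReal.ofReal (a - (b - ξ.2)) + ENNReal.ofReal (0 - -ξ.2)
        ≤ ENNReal.ofReal ((L + 1) * ‖ξ‖) + ENNReal.ofReal ‖ξ‖ := by
          refine add_le_add (ENNReal.ofReal_le_ofReal ?_) (ENNReal.ofReal_le_ofReal ?_)
          · linarith [neg_abs_le (b - a), le_abs_self ξ.2]
          · linarith [le_abs_self ξ.2]
      _ = ENNReal.ofReal ((L + 1) * ‖ξ‖ + ‖ξ‖) :=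
          (ENNReal.ofReal_add (by positivity) hn).symm
      _ ≤ _ := ENNReal.ofReal_le_ofReal (by nlinarith)

/-! ### Fubini and symmetrization -/

lemma integrable_phase_mul_Js {d : ℕ} (hd : 2 ≤ d) {s : ℝ} (hs : s ∈ Ioo (0 : ℝ) 1)
    {g : Rm (d - 1) → ℝ} {K : NNReal} {R : ℝ} (hlip : LipschitzWith K g) (hR : 0 ≤ R)
    (hgR : ∀ x, |g x| ≤ R) :
    Integrable (fun z : (Rm (d - 1) × ℝ) × (Rm (d - 1) × ℝ) => phase g z.1 z.2 * Js d s z.2)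
      ((volume.restrict (fund d)).prod volume) := by
  have hmeas : Measurable
      (fun z : (Rm (d - 1) × ℝ) × (Rm (d - 1) × ℝ) => phase g z.1 z.2 * Js d s z.2) :=
    (measurable_phase hlip.continuous.measurable).mul ((measurable_Js d s).comp measurable_snd)
  refine ⟨hmeas.aestronglyMeasurable, ?_⟩
  set M : ℝ := 2 + K + 2 * R with hM
  have hM0 : 0 ≤ M := by positivity
  have hlip' : ∀ x y, |g x - g y| ≤ K * ‖x - y‖ := fun x y => by
    simpa [Real.dist_eq, dist_eq_norm] using hlip.dist_le_mul x y
  have hfibre : ∀ ξ : Rm (d - 1) × ℝ, ∫⁻ x in fund d, ‖phase g x ξ * Js d s ξ‖ₑ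
      ≤ ENNReal.ofReal (M * (min 1 ‖ξ‖ * Js d s ξ)) * volume (cube (d - 1)) := by
    intro ξ
    have hm : Measurable fun x : Rm (d - 1) × ℝ => ‖phase g x ξ‖ₑ :=
      ((measurable_phase hlip.continuous.measurable).comp
        (measurable_id.prodMk measurable_const)).enorm
    simp_rw [enorm_mul]
    rw [lintegral_mul_const _ hm, volume_restrict_fund, lintegral_prod _ hm.aemeasurable]
    calc (∫⁻ x' in cube (d - 1), ∫⁻ t, ‖phase g (x', t) ξ‖ₑ) * ‖Js d s ξ‖ₑ
        ≤ (∫⁻ _ in cube (d - 1), ENNReal.ofReal (M * min 1 ‖ξ‖)) * ‖Js d s ξ‖ₑ := by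
          gcongr with x'
          exact lintegral_enorm_phase_le K.2 hR hlip' hgR x' ξ
      _ = _ := by
          rw [setLIntegral_const, Real.enorm_of_nonneg (Js_nonneg d s ξ), ← mul_assoc M,
            ENNReal.ofReal_mul (by positivity : 0 ≤ M * min 1 ‖ξ‖)]
          ring
  rw [HasFiniteIntegral, lintegral_prod_symm' _ hmeas.enorm]
  refine (lintegral_mono hfibre).trans_lt ?_
  rw [lintegral_mul_const' _ _ (volume_cube_lt_top _).ne]
  refine ENNReal.mul_lt_top ?_ (volume_cube_lt_top _)
  exact ((integrable_min_one_norm_mul_Js hd hs).const_mul M).lintegral_lt_top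

/-- The fibre-integrated interaction at displacement `ξ`. -/
def displacementEnergy {d : ℕ} (g : Rm (d - 1) → ℝ) (ξ : Rm (d - 1) × ℝ) : ℝ :=
  ∫ x' in cube (d - 1), (max 0 (ξ.2 - (g (x' + ξ.1) - g x')) - max 0 ξ.2)

/-- The symmetrized interaction at displacement `ξ`. -/
def symmetrizedEnergy {d : ℕ} (g : Rm (d - 1) → ℝ) (ξ : Rm (d - 1) × ℝ) : ℝ :=
  ∫ x' in cube (d - 1), max 0 (|g (x' + ξ.1) - g x'| - |ξ.2|)

lemma ae_setIntegral_phase_mul_Js {d : ℕ} (hd : 2 ≤ d) {s : ℝ} (hs : s ∈ Ioo (0 : ℝ) 1)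
    {g : Rm (d - 1) → ℝ} {K : NNReal} {R : ℝ} (hlip : LipschitzWith K g) (hR : 0 ≤ R)
    (hgR : ∀ x, |g x| ≤ R) :
    ∀ᵐ ξ : Rm (d - 1) × ℝ, ∫ x in fund d, phase g x ξ * Js d s ξ
      = displacementEnergy g ξ * Js d s ξ := by
  filter_upwards [(integrable_phase_mul_Js hd hs hlip hR hgR).prod_left_ae] with ξ hξ
  rw [volume_restrict_fund] at hξ ⊢
  rw [integral_prod _ hξ, displacementEnergy, ← integral_mul_const]
  refine integral_congr_ae (Eventually.of_forall fun x' => ?_)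
  dsimp only
  rw [integral_mul_const, integral_phase]

lemma integrable_displacementEnergy_mul_Js {d : ℕ} (hd : 2 ≤ d) {s : ℝ}
    (hs : s ∈ Ioo (0 : ℝ) 1) {g : Rm (d - 1) → ℝ} {K : NNReal} {R : ℝ}
    (hlip : LipschitzWith K g) (hR : 0 ≤ R) (hgR : ∀ x, |g x| ≤ R) :
    Integrable (fun ξ => displacementEnergy g ξ * Js d s ξ) :=
  (integrable_phase_mul_Js hd hs hlip hR hgR).integral_prod_right.congr
    (ae_setIntegral_phase_mul_Js hd hs hlip hR hgR)

lemma Psharp_eq_integral_displacementEnergy {d : ℕ} (hd : 2 ≤ d) {s : ℝ}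
    (hs : s ∈ Ioo (0 : ℝ) 1) {g : Rm (d - 1) → ℝ} {K : NNReal} {R : ℝ}
    (hlip : LipschitzWith K g) (hR : 0 ≤ R) (hgR : ∀ x, |g x| ≤ R) :
    Psharp d s {q : Rm (d - 1) × ℝ | q.2 ≤ g q.1} = ∫ ξ, displacementEnergy g ξ * Js d s ξ := by
  rw [← integral_congr_ae (ae_setIntegral_phase_mul_Js hd hs hlip hR hgR),
    ← integral_integral_swap (f := fun x ξ => phase g x ξ * Js d s ξ)
      (integrable_phase_mul_Js hd hs hlip hR hgR), Psharp]
  refine integral_congr_ae (Eventually.of_forall fun x => ?_)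
  dsimp only
  rw [← integral_add_left_eq_self _ x]
  refine integral_congr_ae (Eventually.of_forall fun ξ => ?_)
  dsimp only
  rw [show x - (x + ξ) = -ξ by abel, Js_neg]
  rfl

lemma measurePreserving_neg_snd (m : ℕ) :
    MeasurePreserving (fun ξ : Rm m × ℝ => (ξ.1, -ξ.2)) := by
  rw [Measure.volume_eq_prod]
  exact (MeasurePreserving.id _).prod (Measure.measurePreserving_neg volume)

lemma measurableEmbedding_neg_snd (m : ℕ) :
    MeasurableEmbedding (fun ξ : Rm m × ℝ => (ξ.1, -ξ.2)) :=
  MeasurableEmbedding.id.prodMap (MeasurableEquiv.neg ℝ).measurableEmbedding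

lemma max_sub_add_max_neg_sub (u w : ℝ) :
    (max 0 (u - w) - max 0 u) + (max 0 (-u - w) - max 0 (-u)) = -w + max 0 (|w| - |u|) := by
  grind [abs_le]

lemma integrableOn_symmetrizedEnergy {d : ℕ} {g : Rm (d - 1) → ℝ} (hg : Continuous g) {R : ℝ}
    (hgR : ∀ x, |g x| ≤ R) (ξ : Rm (d - 1) × ℝ) :
    IntegrableOn (fun x' => max 0 (|g (x' + ξ.1) - g x'| - |ξ.2|)) (cube (d - 1)) := by
  refine Integrable.of_bound (C := 2 * R) (by fun_prop) (Eventually.of_forall fun x => ?_)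
  have h1 := hgR x
  have h2 := hgR (x + ξ.1)
  have h3 := abs_sub (g (x + ξ.1)) (g x)
  rw [Real.norm_of_nonneg (le_max_left _ _)]
  exact max_le (by linarith [abs_nonneg (g x)]) (by linarith [abs_nonneg ξ.2])

lemma displacementEnergy_add_neg {d : ℕ} {g : Rm (d - 1) → ℝ} (hg : Continuous g) {R : ℝ}
    (hgR : ∀ x, |g x| ≤ R) (hper : IsIntPeriodic g) (ξ : Rm (d - 1) × ℝ) :
    displacementEnergy g ξ + displacementEnergy g (ξ.1, -ξ.2) = symmetrizedEnergy g ξ := by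
  have hint : ∀ h : Rm (d - 1), IntegrableOn (fun x => g (x + h)) (cube (d - 1)) := fun h =>
    Integrable.of_bound (C := R) (by fun_prop) (Eventually.of_forall fun x => hgR _)
  have hint0 : IntegrableOn g (cube (d - 1)) := by simpa using hint 0
  have hdiff : IntegrableOn (fun x => g (x + ξ.1) - g x) (cube (d - 1)) := (hint ξ.1).sub hint0
  have hcst : ∀ c : ℝ, IntegrableOn (fun _ : Rm (d - 1) => c) (cube (d - 1)) := fun c =>
    integrable_const c
  have hdisp : ∀ u : ℝ, IntegrableOn
      (fun x => max 0 (u - (g (x + ξ.1) - g x)) - max 0 u) (cube (d - 1)) := fun u =>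
    ((hcst 0).sup ((hcst u).sub hdiff)).sub (hcst _)
  have hzero : ∫ x in cube (d - 1), -(g (x + ξ.1) - g x) = 0 := by
    rw [integral_neg, integral_sub (hint ξ.1) hint0, hper.setIntegral_cube_add, sub_self, neg_zero]
  rw [displacementEnergy, displacementEnergy, ← integral_add (hdisp _) (hdisp _)]
  simp_rw [max_sub_add_max_neg_sub]
  rw [integral_add hdiff.fun_neg (integrableOn_symmetrizedEnergy hg hgR ξ), hzero, zero_add,
    symmetrizedEnergy]

lemma displacementEnergy_neg_mul_Js {d : ℕ} (s : ℝ) (g : Rm (d - 1) → ℝ) :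
    (fun ξ : Rm (d - 1) × ℝ => displacementEnergy g (ξ.1, -ξ.2) * Js d s ξ)
      = (fun ξ => displacementEnergy g ξ * Js d s ξ) ∘ fun ξ => (ξ.1, -ξ.2) := by
  ext ξ
  simp [Js_neg_snd]

lemma integrable_symmetrizedEnergy_mul_Js {d : ℕ} (hd : 2 ≤ d) {s : ℝ}
    (hs : s ∈ Ioo (0 : ℝ) 1) {g : Rm (d - 1) → ℝ} {K : NNReal} {R : ℝ}
    (hlip : LipschitzWith K g) (hR : 0 ≤ R) (hgR : ∀ x, |g x| ≤ R) (hper : IsIntPeriodic g) :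
    Integrable (fun ξ => symmetrizedEnergy g ξ * Js d s ξ) := by
  have h := integrable_displacementEnergy_mul_Js hd hs hlip hR hgR
  have h' : Integrable fun ξ : Rm (d - 1) × ℝ => displacementEnergy g (ξ.1, -ξ.2) * Js d s ξ := by
    rw [displacementEnergy_neg_mul_Js]
    exact ((measurePreserving_neg_snd _).integrable_comp_emb (measurableEmbedding_neg_snd _)).2 h
  refine (h.add h').congr (Eventually.of_forall fun ξ => ?_)
  simp only [Pi.add_apply, ← add_mul]
  rw [displacementEnergy_add_neg hlip.continuous hgR hper]

lemma two_mul_Psharp_eq {d : ℕ} (hd : 2 ≤ d) {s : ℝ}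
    (hs : s ∈ Ioo (0 : ℝ) 1) {g : Rm (d - 1) → ℝ} {K : NNReal} {R : ℝ}
    (hlip : LipschitzWith K g) (hR : 0 ≤ R) (hgR : ∀ x, |g x| ≤ R) (hper : IsIntPeriodic g) :
    2 * Psharp d s {q : Rm (d - 1) × ℝ | q.2 ≤ g q.1}
      = ∫ ξ, symmetrizedEnergy g ξ * Js d s ξ := by
  have h := integrable_displacementEnergy_mul_Js hd hs hlip hR hgR
  have hflip := (measurePreserving_neg_snd (d - 1)).integral_comp (measurableEmbedding_neg_snd _)
    fun ξ => displacementEnergy g ξ * Js d s ξ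
  have h' : Integrable fun ξ : Rm (d - 1) × ℝ => displacementEnergy g (ξ.1, -ξ.2) * Js d s ξ := by
    rw [displacementEnergy_neg_mul_Js]
    exact ((measurePreserving_neg_snd _).integrable_comp_emb (measurableEmbedding_neg_snd _)).2 h
  have hsum : ∀ ξ, symmetrizedEnergy g ξ * Js d s ξ = displacementEnergy g ξ * Js d s ξ
      + displacementEnergy g (ξ.1, -ξ.2) * Js d s ξ := fun ξ => by
    rw [← displacementEnergy_add_neg hlip.continuous hgR hper, add_mul]
  simp_rw [hsum]
  rw [integral_add h h', displacementEnergy_neg_mul_Js,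
    Psharp_eq_integral_displacementEnergy hd hs hlip hR hgR, two_mul]
  exact congrArg (_ + ·) hflip.symm

/-! ### Convexity and the lower bound -/

lemma symmetrizedEnergy_nonneg {d : ℕ} (g : Rm (d - 1) → ℝ) (ξ : Rm (d - 1) × ℝ) :
    0 ≤ symmetrizedEnergy g ξ :=
  integral_nonneg fun _ => le_max_left _ _

lemma symmetrizedEnergy_mul_le {d : ℕ} {g : Rm (d - 1) → ℝ} (hg : Continuous g) {R : ℝ}
    (hgR : ∀ x, |g x| ≤ R) {c : ℝ} (hc0 : 0 ≤ c) (hc1 : c ≤ 1) (ξ : Rm (d - 1) × ℝ) :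
    symmetrizedEnergy (fun x => c * g x) ξ ≤ c * symmetrizedEnergy g ξ := by
  rw [symmetrizedEnergy, symmetrizedEnergy, ← integral_const_mul]
  have hcgR : ∀ x, |c * g x| ≤ R := fun x => by
    rw [abs_mul, abs_of_nonneg hc0]
    exact (mul_le_of_le_one_left (abs_nonneg _) hc1).trans (hgR x)
  refine integral_mono (integrableOn_symmetrizedEnergy (hg.const_mul c) hcgR ξ)
    ((integrableOn_symmetrizedEnergy hg hgR ξ).const_mul c) fun x => ?_
  dsimp only
  rw [← mul_sub, abs_mul, abs_of_nonneg hc0, mul_max_of_nonneg _ _ hc0, mul_zero]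
  refine max_le_max le_rfl ?_
  nlinarith [abs_nonneg ξ.2]

/-- The perimeter excess is bounded below uniformly among Lipschitz graphs of given oscillation. -/
lemma exists_pos_le_integral_symmetrizedEnergy {d : ℕ} (hd : 2 ≤ d) {s : ℝ}
    (hs : s ∈ Ioo (0 : ℝ) 1) (K : NNReal) {δ : ℝ} (hδ : 0 < δ) :
    ∃ c : ℝ, 0 < c ∧ ∀ (R : ℝ) (g : Rm (d - 1) → ℝ), 0 ≤ R → LipschitzWith K g →
      IsIntPeriodic g → (∀ x, |g x| ≤ R) → δ ≤ (⨆ x, g x) - (⨅ x, g x) →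
        c ≤ ∫ ξ, symmetrizedEnergy g ξ * Js d s ξ := by
  set r : ℝ := δ / (16 * (K + 1)) with hr
  have hr0 : 0 < r := by positivity
  have hKr : (K + 1) * r = δ / 16 := by
    rw [hr]
    field_simp
  have hrδ : r ≤ δ / 16 := by nlinarith [K.2, mul_nonneg K.2 hr0.le]
  obtain ⟨v, hv0, hv⟩ := exists_pos_le_volume_ball_inter_cube (d - 1) hr0
  set D : ℝ := ((d - 1 : ℕ) : ℝ) * 1 + r + r with hD
  have hD0 : 0 < D := by positivity
  set j : ℝ := D ^ (-((d : ℝ) + s)) with hj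
  have hj0 : 0 < j := Real.rpow_pos_of_pos hD0 _
  set w : ℝ := volume.real (Metric.closedBall (0 : Rm (d - 1) × ℝ) r) with hw
  have hw0 : 0 < w := ENNReal.toReal_pos (Metric.measure_closedBall_pos volume _ hr0).ne'
    measure_closedBall_lt_top.ne
  refine ⟨w * (v * (δ / 4) * j), by positivity, fun R g hR hlip hper hgR hosc => ?_⟩
  have hlip' : ∀ x y, |g x - g y| ≤ K * ‖x - y‖ := fun x y => by
    simpa [Real.dist_eq, dist_eq_norm] using hlip.dist_le_mul x y
  obtain ⟨p, hp, q, hq, hpq⟩ : ∃ p ∈ cube (d - 1), ∃ q ∈ cube (d - 1), δ / 2 ≤ g p - g q := by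
    obtain ⟨p, hp⟩ := exists_lt_of_lt_ciSup (f := g) (b := (⨆ x, g x) - δ / 4) (by linarith)
    obtain ⟨q, hq⟩ := exists_lt_of_ciInf_lt (f := g) (a := (⨅ x, g x) + δ / 4) (by linarith)
    obtain ⟨p', hp', hpe⟩ := hper.exists_mem_cube p
    obtain ⟨q', hq', hqe⟩ := hper.exists_mem_cube q
    exact ⟨p', hp', q', hq', by linarith⟩
  have hqp : ‖q - p‖ ≤ ((d - 1 : ℕ) : ℝ) * 1 := by
    refine norm_le_card_mul zero_le_one fun i => ?_
    have h1 := hp i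
    have h2 := hq i
    rw [PiLp.sub_apply, abs_le]
    constructor <;> linarith [h1.1, h1.2, h2.1, h2.2]
  set S : Set (Rm (d - 1) × ℝ) := Metric.closedBall (q - p, 0) r with hS
  have hSw : volume.real S = w := by
    rw [hw, hS, Measure.real, Measure.real, Measure.addHaar_closedBall_center]
  have hpoint : ∀ ξ ∈ S, v * (δ / 4) * j ≤ symmetrizedEnergy g ξ * Js d s ξ := by
    intro ξ hξ
    rw [hS, mem_closedBall_iff_norm, Prod.norm_def, max_le_iff] at hξ
    obtain ⟨hξ1, hξ2⟩ := hξ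
    simp only [Prod.fst_sub, Prod.snd_sub, sub_zero, Real.norm_eq_abs] at hξ1 hξ2
    have hosc' : ∀ x ∈ Metric.closedBall p r, δ / 4 + |ξ.2| ≤ |g (x + ξ.1) - g x| := by
      intro x hx
      rw [mem_closedBall_iff_norm] at hx
      have h1 := hlip' x p
      have h2 := hlip' (x + ξ.1) q
      have h3 : ‖x + ξ.1 - q‖ ≤ r + r := by
        rw [show x + ξ.1 - q = (x - p) + (ξ.1 - (q - p)) by abel]
        exact (norm_add_le _ _).trans (add_le_add hx hξ1)
      have h4 : K * ‖x - p‖ ≤ K * r := mul_le_mul_of_nonneg_left hx K.2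
      have h5 : K * ‖x + ξ.1 - q‖ ≤ K * (r + r) := mul_le_mul_of_nonneg_left h3 K.2
      have h6 := neg_abs_le (g x - g p)
      have h7 := le_abs_self (g (x + ξ.1) - g q)
      have h8 := neg_abs_le (g (x + ξ.1) - g x)
      have h9 : K * (r + r) = 2 * (K * r) := by ring
      have h10 : K * r ≤ δ / 16 := by linarith
      linarith
    have hξ0 : ξ ≠ 0 := by
      rintro rfl
      have := hosc' p (Metric.mem_closedBall_self hr0.le)
      simp at this
      linarith
    have hJ : j ≤ Js d s ξ := by
      refine Real.rpow_le_rpow_of_nonpos ((norm_pos_iff.2 hξ0).trans_le (norm_le_enorm2 d ξ)) ?_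
        (by linarith [hs.1, (Nat.cast_nonneg d : (0 : ℝ) ≤ d)])
      have h1 : ‖ξ.1‖ ≤ ‖ξ.1 - (q - p)‖ + ‖q - p‖ := by
        simpa using norm_add_le (ξ.1 - (q - p)) (q - p)
      linarith [enorm2_le d ξ]
    have hE : v * (δ / 4) ≤ symmetrizedEnergy g ξ := by
      have hint := integrableOn_symmetrizedEnergy hlip.continuous hgR ξ
      have hmeas : MeasurableSet (Metric.closedBall p r ∩ cube (d - 1)) :=
        Metric.isClosed_closedBall.measurableSet.inter (measurableSet_cube _)
      have hfin : volume (Metric.closedBall p r ∩ cube (d - 1)) ≠ ∞ :=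
        ((measure_mono inter_subset_right).trans_lt (volume_cube_lt_top _)).ne
      calc v * (δ / 4) ≤ volume.real (Metric.closedBall p r ∩ cube (d - 1)) * (δ / 4) := by
            gcongr
            exact hv p hp
        _ = ∫ _ in Metric.closedBall p r ∩ cube (d - 1), δ / 4 := by
            rw [setIntegral_const, smul_eq_mul]
        _ ≤ ∫ x' in Metric.closedBall p r ∩ cube (d - 1),
              max 0 (|g (x' + ξ.1) - g x'| - |ξ.2|) := by
            refine setIntegral_mono_on (integrableOn_const hfin)
              (hint.mono_set inter_subset_right) hmeas fun x hx => ?_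
            exact le_max_of_le_right (by linarith [hosc' x hx.1])
        _ ≤ symmetrizedEnergy g ξ :=
            setIntegral_mono_set hint (Eventually.of_forall fun x => le_max_left _ _)
              (Eventually.of_forall inter_subset_right)
    exact mul_le_mul hE hJ hj0.le (symmetrizedEnergy_nonneg g ξ)
  have hint := integrable_symmetrizedEnergy_mul_Js hd hs hlip hR hgR hper
  calc w * (v * (δ / 4) * j) = ∫ _ in S, v * (δ / 4) * j := by
        rw [setIntegral_const, hSw, smul_eq_mul]
    _ ≤ ∫ ξ in S, symmetrizedEnergy g ξ * Js d s ξ :=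
        setIntegral_mono_on (integrableOn_const measure_closedBall_lt_top.ne) hint.integrableOn
          Metric.isClosed_closedBall.measurableSet hpoint
    _ ≤ ∫ ξ, symmetrizedEnergy g ξ * Js d s ξ :=
        setIntegral_le_integral hint (Eventually.of_forall fun ξ =>
          mul_nonneg (symmetrizedEnergy_nonneg g ξ) (Js_nonneg d s ξ))

/-- The renormalized periodic fractional perimeter satisfies assumption (H). -/
theorem Psharp_assumptionH (d : ℕ) (hd : 2 ≤ d) (s : ℝ) (hs : s ∈ Set.Ioo (0:ℝ) 1)
    (L δ : ℝ) (hL : 0 < L) (hδ : 0 < δ) :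
    ∃ ε₀ ∈ Set.Ioo (0:ℝ) 1, ∃ C : ℝ, 0 < C ∧
      ∀ R : ℝ, 0 < R → ∀ g : Rm (d-1) → ℝ,
        LipschitzWith (Real.toNNReal L) g →
        (∀ (x : Rm (d-1)) (z : Fin (d-1) → ℤ),
          g (x + (show Rm (d-1) from WithLp.toLp 2 (fun i => (z i : ℝ)))) = g x) →
        (∀ x, |g x| ≤ R) →
        δ ≤ (⨆ x, g x) - (⨅ x, g x) →
        ∀ ε : ℝ, 0 < ε → ε ≤ ε₀ →
          C * ε ≤ Psharp d s {q : Rm (d-1) × ℝ | q.2 ≤ g q.1}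
                    - Psharp d s {q : Rm (d-1) × ℝ | q.2 ≤ (1 - ε) * g q.1} := by
  obtain ⟨c, hc0, hc⟩ := exists_pos_le_integral_symmetrizedEnergy hd hs (Real.toNNReal L) hδ
  refine ⟨1 / 2, by norm_num, c / 2, by positivity, fun R hR g hlip hper hgR hosc ε hε hε₀ => ?_⟩
  have hper' : IsIntPeriodic g := hper
  have h0 : 0 ≤ 1 - ε := by linarith
  have h1 : 1 - ε ≤ 1 := by linarith
  have hgR' : ∀ x, |(1 - ε) * g x| ≤ R := fun x => by
    rw [abs_mul, abs_of_nonneg h0]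
    exact (mul_le_of_le_one_left (abs_nonneg _) h1).trans (hgR x)
  have hlip' : LipschitzWith (Real.toNNReal L) fun x => (1 - ε) * g x :=
    LipschitzWith.of_dist_le_mul fun x y => by
      rw [Real.dist_eq, ← mul_sub, abs_mul, abs_of_nonneg h0, ← Real.dist_eq]
      exact (mul_le_of_le_one_left dist_nonneg h1).trans (hlip.dist_le_mul x y)
  have hperε : IsIntPeriodic fun x => (1 - ε) * g x := fun x z => by
    dsimp only
    rw [hper' x z]
  have hP := two_mul_Psharp_eq hd hs hlip hR.le hgR hper'
  have hPε := two_mul_Psharp_eq hd hs hlip' hR.le hgR' hperε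
  have hle : ∫ ξ, symmetrizedEnergy (fun x => (1 - ε) * g x) ξ * Js d s ξ
      ≤ (1 - ε) * ∫ ξ, symmetrizedEnergy g ξ * Js d s ξ := by
    rw [← integral_const_mul]
    refine integral_mono (integrable_symmetrizedEnergy_mul_Js hd hs hlip' hR.le hgR' hperε)
      ((integrable_symmetrizedEnergy_mul_Js hd hs hlip hR.le hgR hper').const_mul _) fun ξ => ?_
    dsimp only
    rw [← mul_assoc]
    exact mul_le_mul_of_nonneg_right
      (symmetrizedEnergy_mul_le hlip.continuous hgR h0 h1 ξ) (Js_nonneg d s ξ)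
  have hlow := mul_le_mul_of_nonneg_right (hc R g hR.le hlip hper' hgR hosc) hε.le
  linarith
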